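/- arXiv:1702.01677 — 3 statements merged into one kernel-verified Lean document; each statement's English description precedes it below -/
import Mathlib

section
/- Let G be a task graph with present bias β ∈ (0,1], and let c̃ be any cost configuration that is motivating for a reward q > 0. Then there exists a subgraph G' of G (namely the one retaining exactly the edges of a cheapest directed path from s to t) that is motivating for the reward q/β. In particular, the ratio between the minimum reward admitting a motivating subgraph and the infimum of rewards admitting a motivating cost configuration is at most 1/β. -/
/-!
A motivated agent at `s ≠ t` takes a first step `(s,w)` with
`c̃(s,w) + β d̃(w) ≤ β q`, where `c̃` are the increased costs and `d̃` the corresponding distances.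
Since `β ≤ 1` and costs only increased, the left side is at least
`β (c(s,w) + d(w)) ≥ β d(s)`; hence `d(s) ≤ q` (`dcost_source_le`).

Keep only a cheapest `s`–`t` path `p`, which exists because walks in a finite DAG are duplicate-free
and so finitely many. At a node `v` of `p` the only outgoing edge leads to the successor `w`
on `p`, and its perceived cost `c(v,w) + β d_p(w)` is at most the cost of the part of `p` starting
at `v`, hence at most `d(s) ≤ q = β (q / β)` (`motivating_path`).

The comparison of infima follows by applying this to every reward admitting a motivating
configuration.
-/

/-!
Framework: task graphs, present-biased agents, perceived costs, greedy walks,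
motivating rewards, cost configurations and subgraphs
(Kleinberg–Oren model, following Albers–Kraft).
-/

variable {V : Type} [Fintype V] [DecidableEq V]

/-- The list of (directed) edges traversed by a walk given as a list of vertices. -/
def walkEdges (p : List V) : List (V × V) := p.zip p.tail

/-- `p` is a walk in the edge set `E`: consecutive vertices are joined by edges. -/
def IsWalk (E : Finset (V × V)) (p : List V) : Prop :=
  List.Chain' (fun u v : V => (u, v) ∈ E) p

/-- `p` is a walk in `E` from `a` to `b`. -/
def IsWalkFrom (E : Finset (V × V)) (p : List V) (a b : V) : Prop :=
  IsWalk E p ∧ p.head? = some a ∧ p.getLast? = some b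

/-- There is a walk in `E` from `a` to `b`. -/
def Reaches (E : Finset (V × V)) (a b : V) : Prop :=
  ∃ p : List V, IsWalkFrom E p a b

/-- Total cost of a walk. -/
noncomputable def walkCost (c : V × V → ℝ) (p : List V) : ℝ :=
  ((walkEdges p).map c).sum

/-- A task graph: a finite DAG with source `s`, target `t`, nonnegative edge
costs, in which every node lies on some directed path from `s` to `t`. -/
structure TaskGraph (V : Type) [Fintype V] [DecidableEq V] where
  E : Finset (V × V)
  s : V
  t : V
  c : V × V → ℝ
  c_nonneg : ∀ e ∈ E, 0 ≤ c e
  acyclic : ∀ p : List V, IsWalk E p → p.Nodup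
  onPath : ∀ v : V, ∃ p : List V, IsWalkFrom E p s t ∧ v ∈ p

/-- `dcost E c t v` : cost of a cheapest walk from `v` to `t` in `E` w.r.t. costs `c`. -/
noncomputable def dcost (E : Finset (V × V)) (c : V × V → ℝ) (t v : V) : ℝ :=
  sInf (walkCost c '' {p : List V | IsWalkFrom E p v t})

/-- Perceived cost `η(v,w) = c(v,w) + β d(w)` of an edge for a `β`-present-biased agent. -/
noncomputable def etaCost (E : Finset (V × V)) (c : V × V → ℝ) (t : V) (β : ℝ)
    (e : V × V) : ℝ :=
  c e + β * dcost E c t e.2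

/-- Lowest perceived cost `ζ(v)`: the infimum of `η(v,w)` over edges `(v,w) ∈ E`
whose head `w` admits a continuation to `t` (i.e. over the agent's possible plans). -/
noncomputable def zetaCost (E : Finset (V × V)) (c : V × V → ℝ) (t : V) (β : ℝ)
    (v : V) : ℝ :=
  sInf {x : ℝ | ∃ w : V, (v, w) ∈ E ∧ Reaches E w t ∧ etaCost E c t β (v, w) = x}

/-- One step of the agent's greedy walk for reward `r`: she traverses only
edges realizing the lowest perceived cost, and only if `ζ(v) ≤ β r`. -/
def GreedyStep (E : Finset (V × V)) (c : V × V → ℝ) (t : V) (β r : ℝ) (v w : V) : Prop :=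
  v ≠ t ∧ (v, w) ∈ E ∧ Reaches E w t ∧
    etaCost E c t β (v, w) = zetaCost E c t β v ∧ zetaCost E c t β v ≤ β * r

/-- Nodes the agent may visit on some greedy walk from `s`. -/
inductive AgentReach (E : Finset (V × V)) (c : V × V → ℝ) (s t : V) (β r : ℝ) : V → Prop
  | start : AgentReach E c s t β r s
  | step {v w : V} : AgentReach E c s t β r v → GreedyStep E c t β r v w →
      AgentReach E c s t β r w

/-- The task graph (with edge set `E`, costs `c`) is motivating for reward `r`:
at every node the agent may reach, she neither abandons nor gets stuck,
i.e. she can always perform a greedy step (hence, the graph being a finite DAG,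
she reaches `t` on every greedy walk). -/
def Motivating (E : Finset (V × V)) (c : V × V → ℝ) (s t : V) (β r : ℝ) : Prop :=
  ∀ v : V, AgentReach E c s t β r v → v ≠ t → ∃ w : V, GreedyStep E c t β r v w

/-- A complete greedy walk of the agent from `s` to `t`. -/
def AgentWalk (E : Finset (V × V)) (c : V × V → ℝ) (s t : V) (β r : ℝ) (p : List V) : Prop :=
  IsWalkFrom E p s t ∧ List.Chain' (GreedyStep E c t β r) p

/-- An initial segment of a greedy walk of the agent starting at `s`. -/
def GreedyPrefix (E : Finset (V × V)) (c : V × V → ℝ) (s t : V) (β r : ℝ) (p : List V) : Prop :=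
  p.head? = some s ∧ List.Chain' (GreedyStep E c t β r) p

/-- A cost configuration: nonnegative extra costs on the edges. -/
def CostConfig (c' : V × V → ℝ) : Prop := ∀ e : V × V, 0 ≤ c' e

/-- The modified costs obtained by applying a cost configuration to `G`. -/
noncomputable def addc (G : TaskGraph V) (c' : V × V → ℝ) : V × V → ℝ :=
  fun e => G.c e + c' e

/-- The cost configuration `c'` is motivating for reward `r` on `G`. -/
def MotivatingConfig (G : TaskGraph V) (β r : ℝ) (c' : V × V → ℝ) : Prop :=
  Motivating G.E (addc G c') G.s G.t β r

/-- The subgraph of `G` with edge set `E'` (retaining an `s`–`t` path) is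
motivating for reward `r`; all quantities are computed within the subgraph. -/
def MotivatingSubgraph (G : TaskGraph V) (β r : ℝ) (E' : Finset (V × V)) : Prop :=
  E' ⊆ G.E ∧ (∃ p : List V, IsWalkFrom E' p G.s G.t) ∧ Motivating E' G.c G.s G.t β r

lemma walkEdges_cons_cons (a b : V) (l : List V) :
    walkEdges (a :: b :: l) = (a, b) :: walkEdges (b :: l) := by
  simp [walkEdges]

lemma walkCost_cons_cons (c : V × V → ℝ) (a b : V) (l : List V) :
    walkCost c (a :: b :: l) = c (a, b) + walkCost c (b :: l) := by
  simp [walkCost, walkEdges_cons_cons]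

lemma isWalk_cons_cons {E : Finset (V × V)} {a b : V} {l : List V} :
    IsWalk E (a :: b :: l) ↔ (a, b) ∈ E ∧ IsWalk E (b :: l) := by
  simp [IsWalk, List.Chain']

lemma isWalk_iff_walkEdges {E : Finset (V × V)} (p : List V) :
    IsWalk E p ↔ ∀ e ∈ walkEdges p, e ∈ E := by
  induction p with
  | nil => simp [IsWalk, List.Chain', walkEdges]
  | cons a l ih =>
    cases l with
    | nil => simp [IsWalk, List.Chain', walkEdges]
    | cons b l => rw [isWalk_cons_cons, ih, walkEdges_cons_cons]; simp

/-- On a duplicate-free walk every vertex has at most one successor. -/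
lemma walkEdges_succ_unique {p : List V} (hp : p.Nodup) {v w w' : V}
    (h : (v, w) ∈ walkEdges p) (h' : (v, w') ∈ walkEdges p) : w = w' := by
  induction p with
  | nil => simp [walkEdges] at h
  | cons a l ih =>
    cases l with
    | nil => simp [walkEdges] at h
    | cons b l =>
      have hmem : ∀ x : V, (a, x) ∉ walkEdges (b :: l) := fun x hx =>
        (List.nodup_cons.1 hp).1 (List.of_mem_zip hx).1
      rw [walkEdges_cons_cons, List.mem_cons] at h h'
      rcases h with h | h <;> rcases h' with h' | h'
      · simp_all
      · obtain ⟨rfl, rfl⟩ := Prod.mk.inj h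
        exact absurd h' (hmem _)
      · obtain ⟨rfl, rfl⟩ := Prod.mk.inj h'
        exact absurd h (hmem _)
      · exact ih (List.nodup_cons.1 hp).2 h h'

lemma walkCost_nonneg {E : Finset (V × V)} {c : V × V → ℝ} (hc : ∀ e ∈ E, 0 ≤ c e)
    {p : List V} (hp : IsWalk E p) : 0 ≤ walkCost c p := by
  refine List.sum_nonneg fun x hx => ?_
  obtain ⟨e, he, rfl⟩ := List.mem_map.1 hx
  exact hc e ((isWalk_iff_walkEdges p).1 hp e he)

lemma walkCost_suffix_le {E : Finset (V × V)} {c : V × V → ℝ} (hc : ∀ e ∈ E, 0 ≤ c e)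
    (l₁ : List V) {m : List V} (hp : IsWalk E (l₁ ++ m)) :
    walkCost c m ≤ walkCost c (l₁ ++ m) := by
  induction l₁ with
  | nil => simp
  | cons a l ih =>
    rw [List.cons_append] at hp ⊢
    cases h : l ++ m with
    | nil =>
      obtain ⟨rfl, rfl⟩ := List.append_eq_nil_iff.1 h
      simp [walkCost, walkEdges]
    | cons b k =>
      rw [h] at hp ih
      rw [isWalk_cons_cons] at hp
      rw [walkCost_cons_cons]
      linarith [ih hp.2, hc _ hp.1]

lemma dcost_le {E : Finset (V × V)} {c : V × V → ℝ} (hc : ∀ e ∈ E, 0 ≤ c e)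
    {t v : V} {p : List V} (hp : IsWalkFrom E p v t) : dcost E c t v ≤ walkCost c p := by
  refine csInf_le ⟨0, ?_⟩ ⟨p, hp, rfl⟩
  rintro _ ⟨p', hp', rfl⟩
  exact walkCost_nonneg hc hp'.1

lemma TaskGraph.exists_cheapest (G : TaskGraph V) :
    ∃ p : List V, IsWalkFrom G.E p G.s G.t ∧ walkCost G.c p = dcost G.E G.c G.t G.s := by
  have hfin : {p : List V | IsWalkFrom G.E p G.s G.t}.Finite := by
    refine (List.finite_length_le V (Fintype.card V)).subset fun p hp => ?_
    exact (G.acyclic p hp.1).length_le_card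
  obtain ⟨p₀, hp₀, -⟩ := G.onPath G.s
  exact (Set.Nonempty.image (walkCost G.c) ⟨p₀, hp₀⟩).csInf_mem (hfin.image _)

lemma IsWalkFrom.cons {E : Finset (V × V)} {p : List V} {v w t : V} (hvw : (v, w) ∈ E)
    (hp : IsWalkFrom E p w t) : ∃ l, p = w :: l ∧ IsWalkFrom E (v :: p) v t := by
  obtain ⟨h1, h2, h3⟩ := hp
  cases p with
  | nil => simp at h2
  | cons a l =>
    obtain rfl : a = w := by simpa using h2
    exact ⟨l, rfl, isWalk_cons_cons.2 ⟨hvw, h1⟩, rfl, by simpa using h3⟩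

/-- A reward made motivating by some cost configuration is at least the original distance from
`s` to `t`; only the agent's first step is needed. -/
lemma dcost_source_le (G : TaskGraph V) {β : ℝ} (hβ0 : 0 < β) (hβ1 : β ≤ 1)
    {c' : V × V → ℝ} (hc' : CostConfig c') {q : ℝ} (hq : 0 < q)
    (hmot : MotivatingConfig G β q c') : dcost G.E G.c G.t G.s ≤ q := by
  by_cases hst : G.s = G.t
  · have h : IsWalkFrom G.E [G.s] G.s G.t := ⟨by simp [IsWalk, List.Chain'], rfl, by simp [hst]⟩
    refine (dcost_le G.c_nonneg h).trans ?_
    simpa [walkCost, walkEdges] using hq.le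
  obtain ⟨w, -, hw, ⟨p, hp⟩, heq, hle⟩ := hmot G.s .start hst
  rw [← heq] at hle
  have hd : dcost G.E G.c G.t G.s - G.c (G.s, w) ≤ dcost G.E (addc G c') G.t w := by
    refine le_csInf ⟨_, p, hp, rfl⟩ ?_
    rintro _ ⟨p', hp', rfl⟩
    have hcost : walkCost G.c p' ≤ walkCost (addc G c') p' :=
      List.sum_le_sum fun e _ => le_add_of_nonneg_right (hc' e)
    obtain ⟨l, rfl, h⟩ := hp'.cons hw
    have := dcost_le G.c_nonneg h
    rw [walkCost_cons_cons] at this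
    linarith
  have h0 := G.c_nonneg _ hw
  have h1 : G.c (G.s, w) ≤ addc G c' (G.s, w) := le_add_of_nonneg_right (hc' _)
  simp only [etaCost] at hle
  refine le_of_mul_le_mul_left ?_ hβ0
  nlinarith [mul_le_mul_of_nonneg_left hd hβ0.le, mul_le_mul_of_nonneg_right hβ1 h0]

lemma motivating_path (G : TaskGraph V) {β : ℝ} (hβ0 : 0 < β) (hβ1 : β ≤ 1) {q : ℝ}
    {p : List V} (hp : IsWalkFrom G.E p G.s G.t) (hcost : walkCost G.c p ≤ q) :
    MotivatingSubgraph G β (q / β) (walkEdges p).toFinset := by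
  have hsub : (walkEdges p).toFinset ⊆ G.E := fun e he =>
    (isWalk_iff_walkEdges p).1 hp.1 e (List.mem_toFinset.1 he)
  have hp' : IsWalk (walkEdges p).toFinset p :=
    (isWalk_iff_walkEdges p).2 fun e he => List.mem_toFinset.2 he
  refine ⟨hsub, ⟨p, hp', hp.2⟩, fun v hv hvt => ?_⟩
  have hvp : v ∈ p := by
    cases hv with
    | start => exact List.mem_of_head? hp.2.1
    | step _ h => exact List.mem_of_mem_tail (List.of_mem_zip (List.mem_toFinset.1 h.2.1)).2
  obtain ⟨l₁, l₂, hsplit⟩ := List.append_of_mem hvp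
  cases l₂ with
  | nil =>
    have := hp.2.2
    rw [hsplit] at this
    exact absurd (by simpa using this) hvt
  | cons w l =>
    have htail : IsWalk (walkEdges p).toFinset (v :: w :: l) := by
      have h := hp'
      rw [IsWalk] at h
      nth_rewrite 2 [hsplit] at h
      exact h.right_of_append
    obtain ⟨hvw, hw⟩ := isWalk_cons_cons.1 htail
    have hwt : IsWalkFrom (walkEdges p).toFinset (w :: l) w G.t := by
      refine ⟨hw, rfl, ?_⟩
      have := hp.2.2
      rw [hsplit] at this
      simpa using this
    have hzeta : zetaCost (walkEdges p).toFinset G.c G.t β v =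
        etaCost (walkEdges p).toFinset G.c G.t β (v, w) := by
      refine (congrArg sInf (Set.ext fun x => ?_)).trans (csInf_singleton _)
      constructor
      · rintro ⟨w', hw', -, rfl⟩
        rw [walkEdges_succ_unique (G.acyclic p hp.1) (List.mem_toFinset.1 hw')
          (List.mem_toFinset.1 hvw)]
        rfl
      · rintro rfl
        exact ⟨w, hvw, ⟨_, hwt⟩, rfl⟩
    refine ⟨w, hvt, hvw, ⟨_, hwt⟩, hzeta.symm, ?_⟩
    rw [hzeta, etaCost, mul_div_cancel₀ _ hβ0.ne']
    have hd := dcost_le (fun e he => G.c_nonneg e (hsub he)) hwt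
    have h0 := walkCost_nonneg (fun e he => G.c_nonneg e (hsub he)) hw
    have hsuf := walkCost_suffix_le G.c_nonneg l₁ (hsplit ▸ hp.1)
    rw [← hsplit, walkCost_cons_cons] at hsuf
    nlinarith [mul_le_mul_of_nonneg_left hd hβ0.le, mul_le_mul_of_nonneg_right hβ1 h0]

/-- If some cost configuration is motivating for a reward `q > 0`,
then the subgraph retaining exactly the edges of a cheapest `s`–`t` path is
motivating for the reward `q / β`; in particular the minimum reward admitting a
motivating subgraph is at most `1/β` times the infimum of rewards admitting a
motivating cost configuration. -/
theorem stmt_0 (G : TaskGraph V) (β : ℝ) (hβ0 : 0 < β) (hβ1 : β ≤ 1)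
    (c' : V × V → ℝ) (hc' : CostConfig c') (q : ℝ) (hq : 0 < q)
    (hmot : MotivatingConfig G β q c') :
    (∃ p : List V, IsWalkFrom G.E p G.s G.t ∧
        walkCost G.c p = dcost G.E G.c G.t G.s ∧
        MotivatingSubgraph G β (q / β) (walkEdges p).toFinset) ∧
      sInf {r : ℝ | 0 < r ∧ ∃ E' : Finset (V × V), MotivatingSubgraph G β r E'} ≤
        sInf {r : ℝ | 0 < r ∧ ∃ c'' : V × V → ℝ,
          CostConfig c'' ∧ MotivatingConfig G β r c''} / β := by
  obtain ⟨p, hp, hpc⟩ := G.exists_cheapest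
  have key : ∀ r : ℝ, 0 < r → (∃ c'' : V × V → ℝ, CostConfig c'' ∧ MotivatingConfig G β r c'') →
      MotivatingSubgraph G β (r / β) (walkEdges p).toFinset := fun r hr ⟨_, hc, hm⟩ =>
    motivating_path G hβ0 hβ1 hp (hpc ▸ dcost_source_le G hβ0 hβ1 hc hr hm)
  refine ⟨⟨p, hp, hpc, key q hq ⟨c', hc', hmot⟩⟩, ?_⟩
  rw [le_div_iff₀ hβ0]
  refine le_csInf ⟨q, hq, c', hc', hmot⟩ ?_
  rintro r ⟨hr, hc⟩
  rw [← le_div_iff₀ hβ0]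
  exact csInf_le ⟨0, fun x hx => hx.1.le⟩ ⟨div_pos hr hβ0, _, key r hr hc⟩
end

section
/- For every β ∈ (0,1) and every ε ∈ (0,1), in the task graph G(β,ε) no subgraph is motivating for any reward r < 1/β². -/
/-!
Write `a = (1 - β) ε²` and number the main path `v_0, …, v_{2m}`. At `w` the perceived cost is at
least `1/β > β r`, so a motivated agent never enters `w`; hence she walks along the whole main path,
and `ζ(v_i) = a + β d(v_{i+1}) ≤ β r` for every `i < 2m`.

Distances are bounded below by feasible potentials (`le_dcost`). The potential
`v_i ↦ min ((2m - i) a) (1/β)`, `w ↦ 1/β` shows that a usable shortcut at `v_j`, whose perceived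
cost is at most `1`, can only be declined if `(2m - j) a ≤ 1/β`. So shortcuts survive only where
they save nothing over the main path, and `v_i ↦ (2m - i) a`, `w ↦ 1/β` is a feasible potential
too. It gives `d(v_1) ≥ (2m - 1) a`, hence `ζ(v_0) ≥ 2 m β a ≥ 2/β > β r`, a contradiction.
-/

/-!
Framework: task graphs, present-biased agents, perceived costs, greedy walks,
motivating rewards, cost configurations and subgraphs
(Kleinberg–Oren model, following Albers–Kraft).
-/

variable {V : Type} [Fintype V] [DecidableEq V]

/-- A feasible potential bounds the cost of every walk to `t` from below; feasibility is only
needed along edges whose head still reaches `t`. -/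
lemma le_walkCost {E : Finset (V × V)} {c : V × V → ℝ} {t : V} (f : V → ℝ) (ht : f t ≤ 0)
    (hf : ∀ u v, (u, v) ∈ E → Reaches E v t → f u ≤ c (u, v) + f v) :
    ∀ (p : List V) (v : V), IsWalkFrom E p v t → f v ≤ walkCost c p := by
  intro p
  induction p with
  | nil => rintro v ⟨-, h, -⟩; simp at h
  | cons x l ih =>
    rintro v ⟨hw, hh, hl⟩
    obtain rfl : x = v := by simpa using hh
    cases l with
    | nil =>
      obtain rfl : x = t := by simpa using hl
      simpa [walkCost, walkEdges] using ht
    | cons y l =>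
      have hw' := List.isChain_cons_cons.1 hw
      have hy : IsWalkFrom E (y :: l) y t :=
        ⟨hw'.2, by simp, by simpa [List.getLast?_cons_cons] using hl⟩
      have h1 := ih y hy
      have h2 := hf x y hw'.1 ⟨_, hy⟩
      have h3 : walkCost c (x :: y :: l) = c (x, y) + walkCost c (y :: l) := by
        simp [walkCost, walkEdges]
      linarith

lemma le_dcost {E : Finset (V × V)} {c : V × V → ℝ} {t : V} (f : V → ℝ) (ht : f t ≤ 0)
    (hf : ∀ u v, (u, v) ∈ E → Reaches E v t → f u ≤ c (u, v) + f v)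
    {v : V} (hv : Reaches E v t) : f v ≤ dcost E c t v := by
  obtain ⟨p, hp⟩ := hv
  refine le_csInf ⟨_, p, hp, rfl⟩ ?_
  rintro _ ⟨q, hq, rfl⟩
  exact le_walkCost f ht hf q v hq

lemma dcost_nonneg {E : Finset (V × V)} {c : V × V → ℝ} {t : V} (hc : ∀ e ∈ E, 0 ≤ c e) (v : V) :
    0 ≤ dcost E c t v := by
  apply Real.sInf_nonneg
  rintro _ ⟨q, hq, rfl⟩
  exact le_walkCost (fun _ => 0) le_rfl (fun u v h _ => by simpa using hc _ h) q v hq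

lemma dcost_le_edge {E : Finset (V × V)} {c : V × V → ℝ} {t : V} (hc : ∀ e ∈ E, 0 ≤ c e) {v : V}
    (h : (v, t) ∈ E) : dcost E c t v ≤ c (v, t) := by
  refine csInf_le ⟨0, ?_⟩ ⟨[v, t], ⟨?_, by simp, by simp⟩, by simp [walkCost, walkEdges]⟩
  · rintro _ ⟨q, hq, rfl⟩
    exact le_walkCost (fun _ => 0) le_rfl (fun u v h _ => by simpa using hc _ h) q v hq
  · exact List.isChain_cons_cons.2 ⟨h, List.isChain_singleton _⟩

lemma zetaCost_le {E : Finset (V × V)} {c : V × V → ℝ} {t : V} {β : ℝ} {v w : V}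
    (h : (v, w) ∈ E) (hw : Reaches E w t) : zetaCost E c t β v ≤ etaCost E c t β (v, w) := by
  refine csInf_le (Set.Finite.bddBelow ?_) ⟨w, h, hw, rfl⟩
  refine (Set.finite_range fun w => etaCost E c t β (v, w)).subset ?_
  rintro _ ⟨w, -, -, rfl⟩
  exact ⟨w, rfl⟩

lemma Reaches.exists_edge {E : Finset (V × V)} {v t : V} (h : Reaches E v t) (hv : v ≠ t) :
    ∃ x, (v, x) ∈ E := by
  obtain ⟨p, hw, hh, hl⟩ := h
  match p, hw, hh, hl with
  | [], _, hh, _ => simp at hh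
  | [x], _, hh, hl =>
    simp only [List.head?_cons, List.getLast?_singleton, Option.some.injEq] at hh hl
    exact absurd (hh.symm.trans hl) hv
  | x :: y :: l, hw, hh, _ =>
    obtain rfl : x = v := by simpa using hh
    exact ⟨y, (List.isChain_cons_cons.1 hw).1⟩

/-- For all `β, ε ∈ (0,1)`, in the task graph `G(β,ε)`
(main path `v_1, …, v_{2m+1}` of edges of cost `(1-β)ε²`, free shortcuts
`(v_i, w)` for `i ≤ 2m`, and an edge `(w,t)` of cost `1/β`, where
`m = ⌈β⁻²(1-β)⁻¹ε⁻²⌉`), no subgraph is motivating for any reward `r < 1/β²`.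
Nodes: `some i` is `v_{i+1}`, `none` is `w`. -/
theorem stmt_3 (β ε : ℝ) (hβ0 : 0 < β) (hβ1 : β < 1) (hε0 : 0 < ε) (hε1 : ε < 1)
    (m : ℕ) (hm : m = ⌈1 / (β ^ 2 * (1 - β) * ε ^ 2)⌉₊)
    (G : TaskGraph (Option (Fin (2 * m + 1))))
    (hs : G.s = some ⟨0, by omega⟩) (ht : G.t = some ⟨2 * m, by omega⟩)
    (hE : ∀ a b : Option (Fin (2 * m + 1)), (a, b) ∈ G.E ↔
      ((∃ i j : Fin (2 * m + 1), a = some i ∧ b = some j ∧ (j : ℕ) = (i : ℕ) + 1) ∨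
       (∃ i : Fin (2 * m + 1), (i : ℕ) < 2 * m ∧ a = some i ∧ b = none) ∨
       (a = none ∧ b = some ⟨2 * m, by omega⟩)))
    (hc1 : ∀ i j : Fin (2 * m + 1), G.c (some i, some j) = (1 - β) * ε ^ 2)
    (hc2 : ∀ i : Fin (2 * m + 1), G.c (some i, none) = 0)
    (hc3 : ∀ j : Fin (2 * m + 1), G.c (none, some j) = 1 / β) :
    ∀ (E' : Finset (Option (Fin (2 * m + 1)) × Option (Fin (2 * m + 1)))) (r : ℝ),
      0 < r → r < 1 / β ^ 2 → ¬ MotivatingSubgraph G β r E' := by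
  rintro E' r hr0 hr ⟨hsub, -, hmot⟩
  rw [hs, ht] at hmot
  set t : Option (Fin (2 * m + 1)) := some ⟨2 * m, by omega⟩ with htdef
  set a : ℝ := (1 - β) * ε ^ 2 with ha
  have ha0 : 0 < a := mul_pos (by linarith) (by positivity)
  have hβr : β * r < 1 / β := by
    rw [lt_div_iff₀ (by positivity)] at hr ⊢
    nlinarith
  have hma : 1 / β ≤ m * (β * a) := by
    have h1 : 1 / (β ^ 2 * (1 - β) * ε ^ 2) ≤ m := by rw [hm]; exact Nat.le_ceil _
    have h2 : 0 < β ^ 2 * (1 - β) * ε ^ 2 := by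
      have : 0 < 1 - β := by linarith
      positivity
    rw [div_le_iff₀ h2] at h1
    rw [div_le_iff₀ hβ0, ha]
    linarith
  have hβinv : 0 < 1 / β := by positivity
  have hm0 : 0 < m := by
    rcases Nat.eq_zero_or_pos m with h | h
    · rw [h] at hma; simp at hma; linarith [inv_pos.2 hβ0]
    · exact h
  have hc : ∀ e ∈ E', 0 ≤ G.c e := fun e he => G.c_nonneg e (hsub he)
  -- The agent abandons at `w`, whose only possible outgoing edge costs `1 / β`.
  have hnone : ∀ x, ¬ GreedyStep E' G.c t β r none x := by
    rintro x ⟨-, he, -, h1, h2⟩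
    have hx := (hE _ _).1 (hsub he)
    simp only [reduceCtorEq, false_and, and_false, exists_false, true_and, false_or] at hx
    subst hx
    rw [← h1, etaCost, hc3] at h2
    have := mul_nonneg hβ0.le (dcost_nonneg (t := t) hc t)
    simp only at h2
    linarith
  have hreach : ∀ k (hk : k < 2 * m + 1),
      AgentReach E' G.c (some ⟨0, by omega⟩) t β r (some ⟨k, hk⟩) →
      ∀ hk' : k + 1 < 2 * m + 1, GreedyStep E' G.c t β r (some ⟨k, hk⟩) (some ⟨k + 1, hk'⟩) := by
    intro k hk hR hk'
    obtain ⟨x, hx⟩ := hmot _ hR (by simp [htdef]; omega)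
    rcases (hE _ _).1 (hsub hx.2.1) with ⟨i, j, hi, hj, hij⟩ | ⟨i, -, -, hj⟩ | ⟨hi, -⟩
    · obtain rfl : (⟨k, hk⟩ : Fin (2 * m + 1)) = i := by simpa using hi
      have : j = ⟨k + 1, hk'⟩ := Fin.ext hij
      rw [hj, this] at hx
      exact hx
    · rw [hj] at hx
      obtain ⟨y, hy⟩ := hmot _ (hR.step hx) (by simp [htdef])
      exact absurd hy (hnone y)
    · simp at hi
  have hall : ∀ k (hk : k < 2 * m + 1),
      AgentReach E' G.c (some ⟨0, by omega⟩) t β r (some ⟨k, hk⟩) := by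
    intro k
    induction k with
    | zero => intro _; exact .start
    | succ k ih => intro hk; exact (ih (by omega)).step (hreach k _ (ih (by omega)) hk)
  have hstep := fun k hk => hreach k hk (hall k hk)
  -- A usable shortcut at `v_j` can be declined only if it saves nothing over the main path.
  have hshort : ∀ j : Fin (2 * m + 1), (j : ℕ) < 2 * m → (some j, none) ∈ E' →
      Reaches E' none t → (2 * m - (j : ℝ)) * a ≤ 1 / β := by
    intro j hj he hR
    have hwt : (none, t) ∈ E' := by
      obtain ⟨x, hx⟩ := hR.exists_edge (by simp [htdef])
      have hx' := (hE _ _).1 (hsub hx)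
      simp only [reduceCtorEq, false_and, and_false, exists_false, true_and, false_or] at hx'
      rwa [hx'] at hx
    have h1 : zetaCost E' G.c t β (some j) ≤ 1 := by
      refine (zetaCost_le he hR).trans ?_
      have h := dcost_le_edge hc hwt
      rw [htdef, hc3, ← htdef, le_div_iff₀ hβ0] at h
      simp only [etaCost, hc2]
      linarith
    obtain ⟨-, -, hR', h2, -⟩ := hstep j j.2 (by omega)
    rw [Fin.eta] at h2
    rw [← h2, etaCost, hc1] at h1
    have h3 := le_dcost (E := E') (c := G.c) (t := t)
      (fun x => x.elim (1 / β) fun i : Fin (2 * m + 1) => min ((2 * m - (i : ℝ)) * a) (1 / β))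
      (by simp [htdef]) ?_ hR'
    · simp only [Option.elim_some] at h3 h1
      have h4 : dcost E' G.c t (some ⟨j + 1, by omega⟩) * β ≤ 1 - a := by linarith
      rw [← le_div_iff₀ hβ0] at h4
      have h5 : a < a / β := by rw [lt_div_iff₀ hβ0]; nlinarith
      rw [sub_div] at h4
      rcases min_le_iff.1 (h3.trans h4) with h | h
      · push_cast at h; linarith
      · linarith
    · intro u v huv _
      rcases (hE _ _).1 (hsub huv) with ⟨i, j, rfl, rfl, hij⟩ | ⟨i, -, rfl, rfl⟩ | ⟨rfl, rfl⟩
      · simp only [Option.elim_some, hc1, hij]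
        push_cast
        rw [← min_add_add_left]
        exact min_le_min (by linarith) (by linarith)
      · simp [hc2]
      · simp [htdef, hc3, hβ0.le]
  -- Hence no shortcut lowers the distance below the length of the main path.
  obtain ⟨-, -, hR, h1, h2⟩ := hstep 0 (by omega) (by omega)
  have h3 := le_dcost (E := E') (c := G.c) (t := t)
    (fun x => x.elim (1 / β) fun i : Fin (2 * m + 1) => (2 * m - (i : ℝ)) * a)
    (by simp [htdef]) ?_ hR
  · rw [← h1, etaCost, hc1] at h2
    simp only [Option.elim_some] at h2 h3
    have h4 := mul_le_mul_of_nonneg_left h3 hβ0.le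
    push_cast at h4
    have h5 : β * a < a := by nlinarith
    nlinarith
  · intro u v huv hv
    rcases (hE _ _).1 (hsub huv) with ⟨i, j, rfl, rfl, hij⟩ | ⟨i, hi, rfl, rfl⟩ | ⟨rfl, rfl⟩
    · simp only [Option.elim_some, hc1, hij]
      push_cast
      linarith
    · simpa [hc2] using hshort i hi huv hv
    · simp [htdef, hc3]
end

section
/- Let G be a task graph with present bias β ∈ (0,1], let c̃* be a cost configuration motivating for a reward r, and let P = v_1,…,v_m (with s = v_1, t = v_m, m ≥ 3) be a path that the agent may take from s to t under c̃*. Then for every ε > 0 there exists a cost configuration c̃ with c̃(e) = 0 for every edge e of P such that under c̃ the agent's unique greedy walk from s is exactly P, and c̃ is motivating for the reward r + ε. -/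
/-!
The configuration `c'` is built by backward recursion on the acyclic graph, together with its own
distance function `f`. Edges of `p`, and edges leaving a vertex off `p`, keep their cost. An edge
`(v, w)` that branches off `p` at `v`, where `(v, u)` is the edge of `p`, is made just expensive
enough that its perceived cost exceeds that of `(v, u)` by at least `δ`, i.e. its new cost is
`max (c (v, w)) (c (v, u) + β f u - β f w + δ)` (`newCost`).

The key estimate (`bellman_le`) is `f v ≤ d* v + δ h v`, where `d*` is the distance under `cstar`
and `h v` is the number of vertices reachable from `v`. It is shown by induction on `h`: if `(v, w)`
is the first edge of a cheapest `cstar`-path, the only nontrivial case is that of a surcharged edge,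
where
`f v ≤ c (v, u) + β f u + (1 - β) f w + δ`,
and `c (v, u) + β d* u ≤ c* (v, w) + β d* w` because the agent prefers `u` under `cstar`; the
weights `β` and `1 - β` then recombine to `c* (v, w) + d* w = d* v`, with an error of
`δ (1 + max (h u) (h w)) ≤ δ h v`.

Hence the perceived cost of each edge of `p` exceeds that under `cstar` by at most `β δ |V| = β ε`,
while these edges are strictly preferred at every vertex of `p`; so the agent follows exactly `p` and never gives up.
-/

/-!
Framework: task graphs, present-biased agents, perceived costs, greedy walks,
motivating rewards, cost configurations and subgraphs
(Kleinberg–Oren model, following Albers–Kraft).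
-/

variable {V : Type} [Fintype V] [DecidableEq V]

/-! ### Walks and reachability -/

theorem chain_iff_walkEdges (R : V → V → Prop) (p : List V) :
    List.Chain' R p ↔ ∀ e ∈ walkEdges p, R e.1 e.2 := by
  unfold List.Chain'
  induction p with
  | nil => simp [walkEdges]
  | cons a l ih =>
    cases l with
    | nil => simp [walkEdges]
    | cons b l =>
      have h : walkEdges (a :: b :: l) = (a, b) :: walkEdges (b :: l) := by simp [walkEdges]
      rw [h, List.forall_mem_cons, ← ih]
      simp

theorem isWalkFrom_cons {E : Finset (V × V)} {v w z : V} {q : List V} (hvw : (v, w) ∈ E)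
    (hq : IsWalkFrom E q w z) : IsWalkFrom E (v :: q) v z := by
  obtain ⟨h1, h2, h3⟩ := hq
  cases q with
  | nil => simp at h2
  | cons a l =>
    simp only [List.head?_cons, Option.some.injEq] at h2
    subst h2
    refine ⟨?_, rfl, ?_⟩
    · exact List.isChain_cons_cons.2 ⟨hvw, h1⟩
    · simpa using h3

theorem walkCost_cons {E : Finset (V × V)} {c : V × V → ℝ} {v w z : V} {q : List V}
    (hq : IsWalkFrom E q w z) : walkCost c (v :: q) = c (v, w) + walkCost c q := by
  obtain ⟨h1, h2, h3⟩ := hq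
  cases q with
  | nil => simp at h2
  | cons a l =>
    simp only [List.head?_cons, Option.some.injEq] at h2
    subst h2
    simp [walkCost, walkEdges]

theorem isWalkFrom_cases {E : Finset (V × V)} {v z : V} {q : List V} (hq : IsWalkFrom E q v z) :
    (q = [v] ∧ v = z) ∨ ∃ w q', q = v :: q' ∧ (v, w) ∈ E ∧ IsWalkFrom E q' w z := by
  obtain ⟨h1, h2, h3⟩ := hq
  match q, h1, h2, h3 with
  | [], _, h2, _ => simp at h2
  | [a], _, h2, h3 => left; simp_all
  | a :: b :: l, h1, h2, h3 =>
    right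
    simp only [List.head?_cons, Option.some.injEq] at h2
    subst h2
    unfold IsWalk List.Chain' at h1
    rw [List.isChain_cons_cons] at h1
    exact ⟨b, b :: l, rfl, h1.1, h1.2, rfl, by simpa using h3⟩

theorem reaches_t (G : TaskGraph V) (v : V) : Reaches G.E v G.t := by
  obtain ⟨p, ⟨h1, h2, h3⟩, hv⟩ := G.onPath v
  obtain ⟨a, b, rfl⟩ := List.append_of_mem hv
  refine ⟨v :: b, ?_, rfl, by simpa using h3⟩
  unfold IsWalk at *
  exact h1.right_of_append

theorem not_reaches_of_edge (G : TaskGraph V) {v w : V} (hvw : (v, w) ∈ G.E) :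
    ¬ Reaches G.E w v := by
  rintro ⟨q, hq⟩
  have := G.acyclic _ (isWalkFrom_cons hvw hq).1
  exact (List.nodup_cons.1 this).1 (List.mem_of_getLast? hq.2.2)

theorem exists_edge (G : TaskGraph V) {v : V} (hv : v ≠ G.t) : ∃ w, (v, w) ∈ G.E := by
  obtain ⟨q, hq⟩ := reaches_t G v
  rcases isWalkFrom_cases hq with h | ⟨w, _, _, h, _⟩
  · exact absurd h.2 hv
  · exact ⟨w, h⟩

theorem edge_ne_t (G : TaskGraph V) {v w : V} (hvw : (v, w) ∈ G.E) : v ≠ G.t := by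
  rintro rfl
  exact not_reaches_of_edge G hvw (reaches_t G w)

open Classical in
/-- The number of vertices reachable from `v` (including `v`); it strictly decreases along edges
and so serves as a topological numbering. -/
noncomputable def height (G : TaskGraph V) (v : V) : ℕ :=
  (Finset.univ.filter fun u => Reaches G.E v u).card

theorem height_lt (G : TaskGraph V) {v w : V} (hvw : (v, w) ∈ G.E) :
    height G w < height G v := by
  classical
  unfold height
  apply Finset.card_lt_card
  rw [Finset.ssubset_iff_of_subset]
  · refine ⟨v, ?_, ?_⟩
    · simp only [Finset.mem_filter, Finset.mem_univ, true_and]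
      exact ⟨[v], List.isChain_singleton v, rfl, rfl⟩
    · simpa using not_reaches_of_edge G hvw
  · intro u
    simp only [Finset.mem_filter, Finset.mem_univ, true_and]
    rintro ⟨q, hq⟩
    exact ⟨_, isWalkFrom_cons hvw hq⟩

theorem height_le (G : TaskGraph V) (v : V) : height G v ≤ Fintype.card V :=
  Finset.card_le_univ _

/-! ### Bellman equations -/

/-- `f` solves the Bellman equations of shortest distances to `t` for the costs `k`. -/
def Bellman (G : TaskGraph V) (k : V × V → ℝ) (f : V → ℝ) : Prop :=
  f G.t = 0 ∧ (∀ v w, (v, w) ∈ G.E → f v ≤ k (v, w) + f w) ∧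
    ∀ v, v ≠ G.t → ∃ w, (v, w) ∈ G.E ∧ f v = k (v, w) + f w

/-- Costs `K f` may depend on the distance function `f` being defined, as long as the cost of an
edge out of `v` only involves the values of `f` at out-neighbours of `v`. -/
theorem exists_bellman (G : TaskGraph V) (K : (V → ℝ) → V × V → ℝ)
    (hK : ∀ f g v w, (v, w) ∈ G.E → (∀ u, (v, u) ∈ G.E → f u = g u) →
      K f (v, w) = K g (v, w)) :
    ∃ f : V → ℝ, Bellman G (K f) f := by
  classical
  let out : V → Finset V := fun v => Finset.univ.filter fun w => (v, w) ∈ G.E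
  let step : (v : V) → ((w : V) → height G w < height G v → ℝ) → ℝ := fun v g =>
    let g' : V → ℝ := fun w => if h : height G w < height G v then g w h else 0
    if h : (out v).Nonempty then (out v).inf' h fun w => K g' (v, w) + g' w else 0
  let wf : WellFounded fun w v : V => height G w < height G v := (measure (height G)).wf
  let f : V → ℝ := wf.fix step
  have hf : ∀ v, ∀ h : (out v).Nonempty, f v = (out v).inf' h fun w => K f (v, w) + f w := by
    intro v h
    have h1 : f v = step v fun w _ => f w := wf.fix_eq step v
    rw [h1]
    simp only [step, dif_pos h]
    apply Finset.inf'_congr h rfl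
    intro w hw
    have hw' : (v, w) ∈ G.E := by simpa [out] using hw
    rw [dif_pos (height_lt G hw')]
    congr 1
    apply hK _ _ _ _ hw'
    intro u hu
    rw [dif_pos (height_lt G hu)]
  refine ⟨f, ?_, ?_, ?_⟩
  · have h1 : f G.t = step G.t fun w _ => f w := wf.fix_eq step G.t
    rw [h1]
    simp only [step]
    rw [dif_neg]
    rintro ⟨w, hw⟩
    exact edge_ne_t G (v := G.t) (w := w) (by simpa [out] using hw) rfl
  · intro v w hvw
    have hw : w ∈ out v := by simpa [out] using hvw
    rw [hf v ⟨w, hw⟩]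
    exact Finset.inf'_le (fun w => K f (v, w) + f w) hw
  · intro v hv
    obtain ⟨w0, hw0⟩ := exists_edge G hv
    have hne : (out v).Nonempty := ⟨w0, by simpa [out] using hw0⟩
    obtain ⟨w, hw, he⟩ := Finset.exists_mem_eq_inf' hne fun w => K f (v, w) + f w
    exact ⟨w, by simpa [out] using hw, by rw [hf v hne, he]⟩

theorem Bellman.le_walkCost {G : TaskGraph V} {k : V × V → ℝ} {f : V → ℝ} (hf : Bellman G k f)
    (q : List V) : ∀ v, IsWalkFrom G.E q v G.t → f v ≤ walkCost k q := by
  induction q with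
  | nil => intro v h; simp [IsWalkFrom] at h
  | cons a l ih =>
    intro v h
    rcases isWalkFrom_cases h with ⟨h1, rfl⟩ | ⟨w, q', h1, hvw, hq'⟩
    · rw [h1, hf.1]; simp [walkCost, walkEdges]
    · obtain ⟨rfl, rfl⟩ := List.cons.inj h1
      rw [walkCost_cons hq']
      linarith [hf.2.1 _ _ hvw, ih w hq']

theorem Bellman.exists_walk {G : TaskGraph V} {k : V × V → ℝ} {f : V → ℝ} (hf : Bellman G k f)
    (v : V) : ∃ q, IsWalkFrom G.E q v G.t ∧ walkCost k q = f v := by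
  induction hn : height G v using Nat.strong_induction_on generalizing v with
  | _ n ih =>
    by_cases hv : v = G.t
    · subst hv
      exact ⟨[G.t], ⟨List.isChain_singleton _, rfl, rfl⟩, by simp [hf.1, walkCost, walkEdges]⟩
    · obtain ⟨w, hvw, he⟩ := hf.2.2 v hv
      obtain ⟨q, hq, hc⟩ := ih _ (hn ▸ height_lt G hvw) w rfl
      exact ⟨v :: q, isWalkFrom_cons hvw hq, by rw [walkCost_cons hq, hc, he]⟩

theorem Bellman.dcost_eq {G : TaskGraph V} {k : V × V → ℝ} {f : V → ℝ} (hf : Bellman G k f) :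
    dcost G.E k G.t = f := by
  funext v
  apply IsLeast.csInf_eq
  constructor
  · obtain ⟨q, hq, hc⟩ := hf.exists_walk v
    exact ⟨q, hq, hc⟩
  · rintro _ ⟨q, hq, rfl⟩
    exact hf.le_walkCost q v hq

theorem bellman_dcost (G : TaskGraph V) (k : V × V → ℝ) :
    Bellman G k (dcost G.E k G.t) := by
  obtain ⟨f, hf⟩ := exists_bellman G (fun _ => k) (fun _ _ _ _ _ _ => rfl)
  rw [hf.dcost_eq]
  exact hf

theorem zetaCost_le_s5 (G : TaskGraph V) (k : V × V → ℝ) (β : ℝ) {v w : V} (hvw : (v, w) ∈ G.E) :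
    zetaCost G.E k G.t β v ≤ etaCost G.E k G.t β (v, w) := by
  apply csInf_le
  · apply Set.Finite.bddBelow
    apply (Set.finite_range fun w => etaCost G.E k G.t β (v, w)).subset
    rintro x ⟨w, -, -, h⟩
    exact ⟨w, h⟩
  · exact ⟨w, hvw, reaches_t G w, rfl⟩

/-! ### Paths in the graph -/

theorem mem_of_mem_walkEdges {p : List V} {v w : V} (h : (v, w) ∈ walkEdges p) : w ∈ p :=
  List.mem_of_mem_tail (List.of_mem_zip h).2

theorem walkEdges_unique {p : List V} (hp : p.Nodup) {v u w : V} (hu : (v, u) ∈ walkEdges p)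
    (hw : (v, w) ∈ walkEdges p) : u = w := by
  induction p with
  | nil => simp [walkEdges] at hu
  | cons a l ih =>
    cases l with
    | nil => simp [walkEdges] at hu
    | cons b l =>
      have h : walkEdges (a :: b :: l) = (a, b) :: walkEdges (b :: l) := by simp [walkEdges]
      rw [h, List.mem_cons] at hu hw
      have ha := (List.nodup_cons.1 hp).1
      have hm : ∀ x, (a, x) ∉ walkEdges (b :: l) := fun x hx => ha (List.of_mem_zip hx).1
      rcases hu with hu | hu <;> rcases hw with hw | hw
      · simp_all
      · obtain ⟨rfl, rfl⟩ := Prod.mk.inj hu; exact absurd hw (hm _)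
      · obtain ⟨rfl, rfl⟩ := Prod.mk.inj hw; exact absurd hu (hm _)
      · exact ih (List.nodup_cons.1 hp).2 hu hw

theorem exists_walkEdge {p : List V} {t : V} (hp : p.getLast? = some t) {v : V} (hv : v ∈ p)
    (hvt : v ≠ t) : ∃ u, (v, u) ∈ walkEdges p := by
  induction p with
  | nil => simp at hv
  | cons a l ih =>
    cases l with
    | nil => simp_all
    | cons b l =>
      have h : walkEdges (a :: b :: l) = (a, b) :: walkEdges (b :: l) := by simp [walkEdges]
      rw [h]
      rcases List.mem_cons.1 hv with rfl | hv
      · exact ⟨b, by simp⟩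
      · obtain ⟨u, hu⟩ := ih (by simpa using hp) hv
        exact ⟨u, List.mem_cons_of_mem _ hu⟩

/-- If the edges of `p` are the only `R`-steps available at their tails and `R` stops at the end `t`
of `p`, then every `R`-chain from the head of `p` is an initial segment of `p`. -/
theorem prefix_of_forced (R : V → V → Prop) (t : V) (ht : ∀ w, ¬ R t w) (p q : List V)
    (hp : p.getLast? = some t) (hR : ∀ v u w, (v, u) ∈ walkEdges p → R v w → w = u)
    (hq : List.Chain' R q) (hhead : q.head? = p.head?) : q <+: p := by
  induction p generalizing q with
  | nil => simp at hp
  | cons a l ih =>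
    cases q with
    | nil => simp
    | cons a' q =>
      obtain rfl : a' = a := by simpa using hhead
      rw [List.cons_prefix_cons]
      refine ⟨rfl, ?_⟩
      cases q with
      | nil => simp
      | cons b q =>
        unfold List.Chain' at hq
        rw [List.isChain_cons_cons] at hq
        cases l with
        | nil =>
          obtain rfl : a' = t := by simpa using hp
          exact absurd hq.1 (ht b)
        | cons u l =>
          have h : walkEdges (a' :: u :: l) = (a', u) :: walkEdges (u :: l) := by
            simp [walkEdges]
          rw [h] at hR
          have hb := hR a' u b (by simp) hq.1
          exact ih _ (by simpa using hp) (fun v u w hvu => hR v u w (List.mem_cons_of_mem _ hvu))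
            hq.2 (by simp [hb])

/-! ### The new cost configuration -/

open Classical in
/-- The modified total costs, as a function of the distance function `f`: an edge that branches off
`p` at `v`, where the edge `(v, u)` belongs to `p`, is raised until its perceived cost exceeds that
of `(v, u)` by at least `δ`; all other edges keep their cost. -/
noncomputable def newCost (c : V × V → ℝ) (p : List V) (β δ : ℝ) (f : V → ℝ) (e : V × V) : ℝ :=
  if e ∈ walkEdges p then c e
  else if h : ∃ u, (e.1, u) ∈ walkEdges p then
    max (c e) (c (e.1, h.choose) + β * f h.choose - β * f e.2 + δ)
  else c e

theorem le_newCost (c : V × V → ℝ) (p : List V) (β δ : ℝ) (f : V → ℝ) (e : V × V) :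
    c e ≤ newCost c p β δ f e := by
  unfold newCost
  split_ifs
  exacts [le_rfl, le_max_left _ _, le_rfl]

theorem newCost_branch (c : V × V → ℝ) {p : List V} (hp : p.Nodup) (β δ : ℝ) (f : V → ℝ)
    {v u w : V} (hu : (v, u) ∈ walkEdges p) (hwu : w ≠ u) :
    newCost c p β δ f (v, w) = max (c (v, w)) (c (v, u) + β * f u - β * f w + δ) := by
  have hw : (v, w) ∉ walkEdges p := fun hw => hwu (walkEdges_unique hp hw hu)
  have h : ∃ u, (v, u) ∈ walkEdges p := ⟨u, hu⟩
  have hc : h.choose = u := walkEdges_unique hp h.choose_spec hu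
  unfold newCost
  rw [if_neg hw, dif_pos h, hc]

theorem newCost_path (c : V × V → ℝ) {p : List V} (β δ : ℝ) (f : V → ℝ) {e : V × V}
    (he : e ∈ walkEdges p) : newCost c p β δ f e = c e := by
  unfold newCost
  rw [if_pos he]

theorem newCost_off (c : V × V → ℝ) {p : List V} (β δ : ℝ) (f : V → ℝ) {v w : V}
    (h : ¬ ∃ u, (v, u) ∈ walkEdges p) : newCost c p β δ f (v, w) = c (v, w) := by
  unfold newCost
  rw [if_neg fun hw => h ⟨w, hw⟩, dif_neg h]

theorem newCost_congr (G : TaskGraph V) (c : V × V → ℝ) {p : List V} (hp : IsWalk G.E p)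
    (β δ : ℝ) (f g : V → ℝ) (v w : V) (hvw : (v, w) ∈ G.E)
    (hfg : ∀ u, (v, u) ∈ G.E → f u = g u) :
    newCost c p β δ f (v, w) = newCost c p β δ g (v, w) := by
  have hpE := (chain_iff_walkEdges _ p).1 hp
  by_cases h : ∃ u, (v, u) ∈ walkEdges p
  · obtain ⟨u, hu⟩ := h
    by_cases hwu : w = u
    · subst hwu
      rw [newCost_path _ _ _ _ hu, newCost_path _ _ _ _ hu]
    · rw [newCost_branch c (G.acyclic p hp) _ _ _ hu hwu,
        newCost_branch c (G.acyclic p hp) _ _ _ hu hwu, hfg u (hpE _ hu), hfg w hvw]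
  · rw [newCost_off _ _ _ _ h, newCost_off _ _ _ _ h]

/-- The distance `f` under the new costs exceeds the distance `d` under the old ones (`k`) by at
most `δ` per step of the topological numbering, provided that under `k` the edges of `p` have
lowest perceived cost. -/
theorem bellman_le (G : TaskGraph V) {k : V × V → ℝ} {p : List V} (hp : IsWalk G.E p) {β δ : ℝ}
    (hβ0 : 0 < β) (hβ1 : β ≤ 1) (hδ : 0 ≤ δ) {f d : V → ℝ} (hck : ∀ e, G.c e ≤ k e)
    (hf : Bellman G (newCost G.c p β δ f) f) (hd : Bellman G k d)
    (hpref : ∀ v u w, (v, u) ∈ walkEdges p → (v, w) ∈ G.E →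
      k (v, u) + β * d u ≤ k (v, w) + β * d w) (v : V) :
    f v ≤ d v + δ * height G v := by
  have hpE := (chain_iff_walkEdges _ p).1 hp
  induction hn : height G v using Nat.strong_induction_on generalizing v with
  | _ n ih =>
    by_cases hv : v = G.t
    · subst hv
      rw [hf.1, hd.1]
      positivity
    · -- The new distance is compared along the first edge of a shortest path for `k`.
      obtain ⟨w, hvw, hdv⟩ := hd.2.2 v hv
      have hfv := hf.2.1 v w hvw
      have key : ∀ x, (v, x) ∈ G.E → f x + δ ≤ d x + δ * n := by
        intro x hx
        have h1 := ih _ (hn ▸ height_lt G hx) x rfl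
        have h2 : ((height G x : ℕ) : ℝ) + 1 ≤ n := by
          exact_mod_cast hn ▸ height_lt G hx
        nlinarith
      have hw := key w hvw
      have hcw := hck (v, w)
      by_cases h : ∃ u, (v, u) ∈ walkEdges p
      · obtain ⟨u, hu⟩ := h
        by_cases hwu : w = u
        · subst hwu
          rw [newCost_path _ _ _ _ hu] at hfv
          linarith
        · rw [newCost_branch G.c (G.acyclic p hp) _ _ _ hu hwu] at hfv
          rcases max_cases (G.c (v, w)) (G.c (v, u) + β * f u - β * f w + δ) with h | h
          · linarith
          · rw [h.1] at hfv
            have h1 := hpref v u w hu hvw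
            have h2 := mul_le_mul_of_nonneg_left (key u (hpE _ hu)) hβ0.le
            have h3 := mul_le_mul_of_nonneg_left hw (sub_nonneg.2 hβ1)
            have h4 := hck (v, u)
            nlinarith
      · rw [newCost_off _ _ _ _ h] at hfv
        linarith

/-- Let `c*` be a cost configuration motivating for reward `r` and
let `p` (with `s = v_1`, `t = v_m`, `m ≥ 3`) be a path the agent may take under `c*`.
Then for every `ε > 0` there is a cost configuration `c'` that charges nothing on
the edges of `p`, under which the agent's unique greedy walk from `s` is exactly
`p`, and which is motivating for the reward `r + ε`. -/
theorem stmt_5 (G : TaskGraph V) (β : ℝ) (hβ0 : 0 < β) (hβ1 : β ≤ 1)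
    (cstar : V × V → ℝ) (hcstar : CostConfig cstar) (r : ℝ) (hr : 0 < r)
    (hmot : MotivatingConfig G β r cstar)
    (p : List V) (hlen : 3 ≤ p.length)
    (hwalk : AgentWalk G.E (addc G cstar) G.s G.t β r p) :
    ∀ ε : ℝ, 0 < ε → ∃ c' : V × V → ℝ, CostConfig c' ∧
      (∀ e ∈ walkEdges p, c' e = 0) ∧
      AgentWalk G.E (addc G c') G.s G.t β (r + ε) p ∧
      (∀ q : List V, GreedyPrefix G.E (addc G c') G.s G.t β (r + ε) q → q <+: p) ∧
      MotivatingConfig G β (r + ε) c' := by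
  intro ε hε
  obtain ⟨⟨hpw, hps, hpt⟩, hgreedy⟩ := hwalk
  rw [chain_iff_walkEdges] at hgreedy
  have hnd := G.acyclic p hpw
  have hpE := (chain_iff_walkEdges _ p).1 hpw
  have hcard : (0 : ℝ) < Fintype.card V := by
    have : Nonempty V := ⟨G.s⟩
    exact_mod_cast Fintype.card_pos
  -- Heights are at most `card V`, so the accumulated error is at most `ε`.
  set δ : ℝ := ε / Fintype.card V with hδ
  have hδ0 : 0 < δ := div_pos hε hcard
  obtain ⟨f, hf⟩ := exists_bellman G (newCost G.c p β δ) (newCost_congr G G.c hpw β δ)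
  have hd := bellman_dcost G (addc G cstar)
  set d := dcost G.E (addc G cstar) G.t with hddef
  have hck : ∀ e, G.c e ≤ addc G cstar e := fun e => by
    have := hcstar e
    simp only [addc]; linarith
  have hfd : ∀ v, f v ≤ d v + ε := by
    intro v
    have h1 := bellman_le G hpw hβ0 hβ1 hδ0.le hck hf hd (by
      intro v u w hu hvw
      have h1 := (hgreedy _ hu).2.2.2.1
      have h2 := zetaCost_le_s5 G (addc G cstar) β hvw
      exact h1.le.trans h2) v
    have h2 : (height G v : ℝ) ≤ Fintype.card V := by exact_mod_cast height_le G v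
    have h3 : δ * Fintype.card V = ε := by rw [hδ]; field_simp
    nlinarith
  have hadd : addc G (fun e => newCost G.c p β δ f e - G.c e) = newCost G.c p β δ f := by
    funext e
    simp [addc]
  have hdf : dcost G.E (newCost G.c p β δ f) G.t = f := hf.dcost_eq
  -- Path edges strictly minimise the perceived cost at their tails.
  have hlt : ∀ v u w, (v, u) ∈ walkEdges p → w ≠ u →
      etaCost G.E (newCost G.c p β δ f) G.t β (v, u) <
        etaCost G.E (newCost G.c p β δ f) G.t β (v, w) := by
    intro v u w hu hwu
    simp only [etaCost, hdf]
    rw [newCost_path _ _ _ _ hu, newCost_branch G.c hnd _ _ _ hu hwu]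
    have := le_max_right (G.c (v, w)) (G.c (v, u) + β * f u - β * f w + δ)
    linarith
  have hstep : ∀ v u, (v, u) ∈ walkEdges p →
      GreedyStep G.E (newCost G.c p β δ f) G.t β (r + ε) v u := by
    intro v u hu
    have hz : zetaCost G.E (newCost G.c p β δ f) G.t β v =
        etaCost G.E (newCost G.c p β δ f) G.t β (v, u) := by
      apply IsLeast.csInf_eq
      refine ⟨⟨u, hpE _ hu, reaches_t G u, rfl⟩, ?_⟩
      rintro x ⟨w, -, -, rfl⟩
      by_cases hwu : w = u
      · rw [hwu]
      · exact (hlt v u w hu hwu).le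
    obtain ⟨h1, h2, h3, h4, h5⟩ := hgreedy _ hu
    refine ⟨h1, h2, h3, hz.symm, ?_⟩
    rw [hz]
    rw [← h4] at h5
    simp only [etaCost, hdf, ← hddef] at h5 ⊢
    rw [newCost_path _ _ _ _ hu]
    have h6 := hck (v, u)
    have h7 := mul_le_mul_of_nonneg_left (hfd u) hβ0.le
    linarith
  have hforced : ∀ v u w, (v, u) ∈ walkEdges p →
      GreedyStep G.E (newCost G.c p β δ f) G.t β (r + ε) v w → w = u := by
    intro v u w hu hw
    by_contra hwu
    have h1 := hlt v u w hu hwu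
    have h2 := hw.2.2.2.1
    have h3 := zetaCost_le_s5 G (newCost G.c p β δ f) β (hpE _ hu)
    linarith
  refine ⟨fun e => newCost G.c p β δ f e - G.c e, ?_, ?_, ?_, ?_, ?_⟩
  · intro e
    exact sub_nonneg.2 (le_newCost _ _ _ _ _ _)
  · intro e he
    simp [newCost_path _ _ _ _ he]
  · rw [hadd]
    exact ⟨⟨hpw, hps, hpt⟩, (chain_iff_walkEdges _ p).2 fun e he => hstep _ _ he⟩
  · rw [hadd]
    rintro q ⟨hq1, hq2⟩
    exact prefix_of_forced _ G.t (fun w hw => hw.1 rfl) p q hpt hforced hq2 (by rw [hq1, hps])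
  · unfold MotivatingConfig
    rw [hadd]
    intro v hv hvt
    have hvp : v ∈ p := by
      clear hvt
      induction hv with
      | start => exact List.mem_of_head? hps
      | step _ hg ih =>
        obtain ⟨u, hu⟩ := exists_walkEdge hpt ih hg.1
        rw [hforced _ _ _ hu hg]
        exact mem_of_mem_walkEdges hu
    obtain ⟨u, hu⟩ := exists_walkEdge hpt hvp hvt
    exact ⟨u, hstep v u hu⟩
end
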